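/- arXiv:1507.01208 — 4 statements merged into one kernel-verified Lean document; each statement's English description precedes it below -/
import Mathlib

section
/- Let L be a type, δ a diversity on L, and Γ a nonempty finite subset of L with cardinality |Γ|. Then δ(Γ) ≤ (|Γ| − 1) · δ^dia(Γ). -/
/-- A diversity on a type `L`. -/
structure Diversity (L : Type*) [DecidableEq L] where
  δ : Finset L → ℝ
  nonneg : ∀ Γ : Finset L, 0 ≤ δ Γ
  eq_zero_iff : ∀ Γ : Finset L, δ Γ = 0 ↔ Γ.card ≤ 1
  mono : ∀ ⦃Γ₁ Γ₂ : Finset L⦄, Γ₁ ⊆ Γ₂ → δ Γ₁ ≤ δ Γ₂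
  triangle : ∀ Γ₁ Γ₂ Γ₃ : Finset L, Γ₂.Nonempty →
    δ (Γ₁ ∪ Γ₃) ≤ δ (Γ₁ ∪ Γ₂) + δ (Γ₂ ∪ Γ₃)

/-- The diameter diversity of a diversity `D`:
`δᵈⁱᵃ(Γ) = max_{i,j ∈ Γ} δ({i,j})` for nonempty `Γ`, and `0` on the empty set. -/
noncomputable def diaDiversity {L : Type*} [DecidableEq L] (D : Diversity L)
    (Γ : Finset L) : ℝ :=
  if h : Γ.Nonempty then (Γ ×ˢ Γ).sup' (h.product h) (fun p => D.δ {p.1, p.2}) else 0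

theorem diversity_le_aux {L : Type*} [DecidableEq L] (D : Diversity L) (M : ℝ)
    (Γ : Finset L) (hΓ : Γ.Nonempty) (h : ∀ i ∈ Γ, ∀ j ∈ Γ, D.δ {i, j} ≤ M) :
    D.δ Γ ≤ ((Γ.card : ℝ) - 1) * M := by
  induction hΓ using Finset.Nonempty.cons_induction with
  | singleton a =>
    have := (D.eq_zero_iff {a}).2 (by simp)
    simp [this]
  | cons a s ha hs ih =>
    have ih' := ih (fun i hi j hj => h i (by simp [hi]) j (by simp [hj]))
    obtain ⟨b, hb⟩ := hs
    have h1 := D.triangle {a} {b} s (Finset.singleton_nonempty b)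
    have e1 : ({a} : Finset L) ∪ s = Finset.cons a s ha := by ext; simp
    have e2 : ({b} : Finset L) ∪ s = s :=
      Finset.union_eq_right.2 (Finset.singleton_subset_iff.2 hb)
    have e3 : ({a} : Finset L) ∪ {b} = {a, b} := rfl
    have h2 := h a (by simp) b (by simp [hb])
    rw [e1, e2, e3] at h1
    rw [Finset.card_cons]
    push_cast
    linarith

/-- for a nonempty finite `Γ`, `δ(Γ) ≤ (|Γ| - 1) · δᵈⁱᵃ(Γ)`. -/
theorem diversity_le_card_mul_dia {L : Type*} [DecidableEq L] (D : Diversity L)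
    (Γ : Finset L) (hΓ : Γ.Nonempty) :
    D.δ Γ ≤ ((Γ.card : ℝ) - 1) * diaDiversity D Γ := by
  apply diversity_le_aux D _ Γ hΓ
  intro i hi j hj
  rw [diaDiversity, dif_pos hΓ]
  exact Finset.le_sup' (fun p : L × L => D.δ {p.1, p.2}) (Finset.mk_mem_product hi hj : (i, j) ∈ Γ ×ˢ Γ)
end

section
/- Let V be a finite nonempty set of variables, L a finite nonempty set of labels, θ : V → L → ℝ arbitrary unary potentials, and C a finite family of nonempty finite subsets of V (cliques). Fix γ : L → ℝ and γmax ∈ ℝ with 0 < γ(l) < γmax for all l ∈ L, and define for a labeling x : V → L and clique c ∈ C the P^n Potts potential θ_c(x) = γ(l) if x(i) = l for all i ∈ c, and θ_c(x) = γmax otherwise. Let E(x) = Σ_{i ∈ V} θ(i, x(i)) + Σ_{c ∈ C} θ_c(x), let M = max_{c ∈ C} |c|, γmin = min_{l ∈ L} γ(l), and λ = γmax/γmin. Suppose x̂ : V → L is a local optimum with respect to expansion moves, i.e. for every α ∈ L and every x' : V → L such that x'(i) ∈ {x̂(i), α} for all i ∈ V, we have E(x̂) ≤ E(x'). Then for every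 labeling x* : V → L: Σ_{i ∈ V} θ(i, x̂(i)) + Σ_{c ∈ C} θ_c(x̂) ≤ Σ_{i ∈ V} θ(i, x*(i)) + λ · min(M, |L|) · Σ_{c ∈ C} θ_c(x*). -/
open Classical in
/-- The `Pⁿ` Potts clique potential: if all variables of the clique `c` take a
common label `l` under `x`, the cost is `γ l`; otherwise it is `γmax`. -/
noncomputable def pottsPot {V L : Type*} (γ : L → ℝ) (γmax : ℝ)
    (c : Finset V) (x : V → L) : ℝ :=
  if h : ∃ l : L, ∀ i ∈ c, x i = l then γ (Classical.choose h) else γmax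

/-- The energy of a labeling under unary potentials `θ` and `Pⁿ` Potts clique
potentials over the clique family `C`. -/
noncomputable def pottsEnergy {V L : Type*} [Fintype V] (θ : V → L → ℝ)
    (γ : L → ℝ) (γmax : ℝ) (C : Finset (Finset V)) (x : V → L) : ℝ :=
  ∑ i, θ i (x i) + ∑ c ∈ C, pottsPot γ γmax c x

lemma pottsPot_const {V L : Type*} (γ : L → ℝ) (γmax : ℝ) (c : Finset V) (hc : c.Nonempty)
    (x : V → L) (a : L) (h : ∀ i ∈ c, x i = a) : pottsPot γ γmax c x = γ a := by
  have hex : ∃ l : L, ∀ i ∈ c, x i = l := ⟨a, h⟩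
  unfold pottsPot
  rw [dif_pos hex]
  obtain ⟨i, hi⟩ := hc
  rw [← Classical.choose_spec hex i hi, h i hi]

lemma pottsPot_nonconst {V L : Type*} (γ : L → ℝ) (γmax : ℝ) (c : Finset V)
    (x : V → L) (h : ¬ ∃ l : L, ∀ i ∈ c, x i = l) : pottsPot γ γmax c x = γmax := by
  unfold pottsPot
  rw [dif_neg h]

lemma pottsPot_congr {V L : Type*} (γ : L → ℝ) (γmax : ℝ) (c : Finset V) (hc : c.Nonempty)
    (x y : V → L) (h : ∀ i ∈ c, x i = y i) : pottsPot γ γmax c x = pottsPot γ γmax c y := by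
  by_cases hy : ∃ l : L, ∀ i ∈ c, y i = l
  · obtain ⟨l, hl⟩ := hy
    rw [pottsPot_const γ γmax c hc y l hl,
      pottsPot_const γ γmax c hc x l (fun i hi => (h i hi).trans (hl i hi))]
  · rw [pottsPot_nonconst γ γmax c y hy, pottsPot_nonconst γ γmax c x]
    rintro ⟨l, hl⟩
    exact hy ⟨l, fun i hi => (h i hi).symm.trans (hl i hi)⟩

lemma pottsPot_le {V L : Type*} (γ : L → ℝ) (γmax : ℝ) (hγlt : ∀ l, γ l < γmax)
    (c : Finset V) (x : V → L) : pottsPot γ γmax c x ≤ γmax := by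
  unfold pottsPot
  split_ifs
  · exact (hγlt _).le
  · exact le_rfl

lemma pottsPot_nonneg {V L : Type*} [Nonempty L] (γ : L → ℝ) (γmax : ℝ) (hγpos : ∀ l, 0 < γ l)
    (hγlt : ∀ l, γ l < γmax)
    (c : Finset V) (x : V → L) : 0 ≤ pottsPot γ γmax c x := by
  unfold pottsPot
  split_ifs
  · exact (hγpos _).le
  · exact ((hγpos (Classical.arbitrary L)).trans (hγlt _)).le

/-- multiplicative bound of `α`-expansion for the `Pⁿ` Potts model.
If `xhat` is a local optimum with respect to expansion moves, then for every
labeling `xstar`, the energy of `xhat` is at most the unary energy of `xstar` plus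
`λ · min(M, |L|)` times the clique energy of `xstar`, where `M` is the size of
the largest clique, `γmin = min_l γ l` and `λ = γmax / γmin`. -/
theorem alphaExpansion_pnPotts_multiplicative_bound
    {V L : Type*} [Fintype V] [Fintype L] [Nonempty V] [Nonempty L]
    (θ : V → L → ℝ) (C : Finset (Finset V)) (hC : ∀ c ∈ C, c.Nonempty)
    (γ : L → ℝ) (γmax : ℝ) (hγpos : ∀ l, 0 < γ l) (hγlt : ∀ l, γ l < γmax)
    (xhat : V → L)
    (hlocal : ∀ α : L, ∀ x' : V → L, (∀ i, x' i = xhat i ∨ x' i = α) →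
      pottsEnergy θ γ γmax C xhat ≤ pottsEnergy θ γ γmax C x')
    (xstar : V → L) :
    ∑ i, θ i (xhat i) + ∑ c ∈ C, pottsPot γ γmax c xhat ≤
      ∑ i, θ i (xstar i) +
        (γmax / Finset.univ.inf' Finset.univ_nonempty γ) *
          ((min (C.sup Finset.card) (Fintype.card L) : ℕ) : ℝ) *
          ∑ c ∈ C, pottsPot γ γmax c xstar := by
  classical
  set lam := γmax / Finset.univ.inf' Finset.univ_nonempty γ with hlam
  set K := min (C.sup Finset.card) (Fintype.card L) with hK
  have hlam1 : 1 ≤ lam := by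
    obtain ⟨l, -, hl⟩ := Finset.exists_mem_eq_inf' (Finset.univ_nonempty (α := L)) γ
    rw [hlam, hl, one_le_div (hγpos l)]
    exact (hγlt l).le
  let xm : L → V → L := fun a i => if xstar i = a then a else xhat i
  have hxm : ∀ a, pottsEnergy θ γ γmax C xhat ≤ pottsEnergy θ γ γmax C (xm a) := by
    intro a
    apply hlocal a
    intro i
    by_cases h : xstar i = a <;> simp [xm, h]
  have hsum : 0 ≤ ∑ a, (pottsEnergy θ γ γmax C (xm a) - pottsEnergy θ γ γmax C xhat) :=
    Finset.sum_nonneg fun a _ => sub_nonneg.2 (hxm a)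
  have hsplit : ∑ a, (pottsEnergy θ γ γmax C (xm a) - pottsEnergy θ γ γmax C xhat)
      = ∑ i, ∑ a, (θ i (xm a i) - θ i (xhat i))
        + ∑ c ∈ C, ∑ a, (pottsPot γ γmax c (xm a) - pottsPot γ γmax c xhat) := by
    rw [Finset.sum_comm (s := (Finset.univ : Finset V)), Finset.sum_comm (s := C),
      ← Finset.sum_add_distrib]
    refine Finset.sum_congr rfl fun a _ => ?_
    simp only [pottsEnergy, Finset.sum_sub_distrib]
    ring
  have hun : ∀ i, ∑ a, (θ i (xm a i) - θ i (xhat i)) = θ i (xstar i) - θ i (xhat i) := by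
    intro i
    rw [Finset.sum_eq_single (xstar i)]
    · simp [xm]
    · intro b _ hb
      simp [xm, hb.symm]
    · simp
  have hcl : ∀ c ∈ C, pottsPot γ γmax c xhat
      + ∑ a, (pottsPot γ γmax c (xm a) - pottsPot γ γmax c xhat)
      ≤ lam * (K : ℝ) * pottsPot γ γmax c xstar := by
    intro c hc
    have hne := hC c hc
    set S := c.image xstar with hS
    have hSne : S.Nonempty := hne.image _
    have hSK : S.card ≤ K :=
      le_min (Finset.card_image_le.trans (Finset.le_sup (f := Finset.card) hc))
        (Finset.card_le_univ S)
    have hS1 : 1 ≤ S.card := hSne.card_pos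
    have hS1r : (1 : ℝ) ≤ S.card := by exact_mod_cast hS1
    have hSKr : (S.card : ℝ) ≤ K := by exact_mod_cast hSK
    have hrestrict : ∑ a, (pottsPot γ γmax c (xm a) - pottsPot γ γmax c xhat)
        = ∑ a ∈ S, (pottsPot γ γmax c (xm a) - pottsPot γ γmax c xhat) := by
      symm
      apply Finset.sum_subset (Finset.subset_univ S)
      intro a _ ha
      rw [sub_eq_zero]
      apply pottsPot_congr γ γmax c hne
      intro i hi
      have : xstar i ≠ a := fun h => ha (h ▸ Finset.mem_image_of_mem xstar hi)
      simp [xm, this]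
    have hp0 := pottsPot_nonneg γ γmax hγpos hγlt c xhat
    have hle : pottsPot γ γmax c xhat
        + ∑ a, (pottsPot γ γmax c (xm a) - pottsPot γ γmax c xhat)
        ≤ ∑ a ∈ S, pottsPot γ γmax c (xm a) := by
      rw [hrestrict, Finset.sum_sub_distrib, Finset.sum_const, nsmul_eq_mul]
      nlinarith
    refine hle.trans ?_
    have hs0 := pottsPot_nonneg γ γmax hγpos hγlt c xstar
    have hle2 : ∑ a ∈ S, pottsPot γ γmax c (xm a) ≤ S.card * pottsPot γ γmax c xstar := by
      rw [← nsmul_eq_mul]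
      apply Finset.sum_le_card_nsmul
      intro a ha
      by_cases hx : ∃ l : L, ∀ i ∈ c, xstar i = l
      · obtain ⟨l, hl⟩ := hx
        obtain ⟨j, hj, rfl⟩ := Finset.mem_image.1 ha
        apply le_of_eq
        apply pottsPot_congr γ γmax c hne
        intro i hi
        simp [xm, hl i hi, hl j hj]
      · rw [pottsPot_nonconst γ γmax c xstar hx]
        exact pottsPot_le γ γmax hγlt c _
    refine hle2.trans (mul_le_mul_of_nonneg_right ?_ hs0)
    nlinarith
  have hcl' := Finset.sum_le_sum hcl
  rw [Finset.sum_add_distrib, ← Finset.mul_sum] at hcl'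
  rw [hsplit, Finset.sum_congr rfl fun i _ => hun i, Finset.sum_sub_distrib] at hsum
  linarith
end

section
/- Let L be a type, δ a diversity on L with induced metric d(i,j) = δ({i,j}), and let d' be a metric on L and K ≥ 0 a real number such that d(i,j) ≤ K · d'(i,j) for all i, j ∈ L. Then for every nonempty finite subset Γ of L: δ(Γ) ≤ (|Γ| − 1) · K · diam_{d'}(Γ), where diam_{d'}(Γ) = max_{i,j ∈ Γ} d'(i,j). -/
/-- Diameter of a finite set with respect to a distance function `d'`:
`max_{i,j ∈ Γ} d'(i,j)` for nonempty `Γ`, and `0` on the empty set. -/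
noncomputable def finsetDiam {L : Type*} (d' : L → L → ℝ) (Γ : Finset L) : ℝ :=
  if h : Γ.Nonempty then (Γ ×ˢ Γ).sup' (h.product h) (fun p => d' p.1 p.2) else 0

/-- if the induced metric `d(i,j) = δ({i,j})` of a diversity is
dominated by `K · d'` for a metric `d'` on `L` and a constant `K ≥ 0`, then for
every nonempty finite `Γ`, `δ(Γ) ≤ (|Γ| - 1) · K · diam_{d'}(Γ)`. -/
theorem diversity_le_dominating_metric_diam {L : Type*} [DecidableEq L]
    (D : Diversity L) (d' : L → L → ℝ)
    (h'nonneg : ∀ i j, 0 ≤ d' i j)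
    (h'eq_zero : ∀ i j, d' i j = 0 ↔ i = j)
    (h'symm : ∀ i j, d' i j = d' j i)
    (h'triangle : ∀ i j k, d' i k ≤ d' i j + d' j k)
    (K : ℝ) (hK : 0 ≤ K)
    (hdom : ∀ i j : L, D.δ {i, j} ≤ K * d' i j)
    (Γ : Finset L) (hΓ : Γ.Nonempty) :
    D.δ Γ ≤ ((Γ.card : ℝ) - 1) * K * finsetDiam d' Γ := by
  have key : ∀ M : ℝ, ∀ S : Finset L, S.Nonempty →
      (∀ i ∈ S, ∀ j ∈ S, D.δ {i, j} ≤ M) → D.δ S ≤ ((S.card : ℝ) - 1) * M := by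
    intro M S hS
    induction hS using Finset.Nonempty.cons_induction with
    | singleton a =>
      intro _
      have h : D.δ {a} = 0 := (D.eq_zero_iff {a}).2 (by simp)
      simp [h]
    | cons a s ha hs ih =>
      intro hM
      obtain ⟨b, hb⟩ := hs
      have h1 := ih (fun i hi j hj =>
        hM i (Finset.mem_cons_of_mem hi) j (Finset.mem_cons_of_mem hj))
      have h2 := hM a (Finset.mem_cons_self a s) b (Finset.mem_cons_of_mem hb)
      have h3 := D.triangle {a} {b} s (Finset.singleton_nonempty b)
      have e1 : ({a} ∪ s : Finset L) = Finset.cons a s ha := by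
        rw [Finset.cons_eq_insert, Finset.insert_eq]
      have e2 : ({b} ∪ s : Finset L) = s := by
        rw [← Finset.insert_eq, Finset.insert_eq_of_mem hb]
      have e3 : ({a} ∪ {b} : Finset L) = {a, b} := by
        rw [← Finset.insert_eq]
      rw [e1, e2, e3] at h3
      rw [Finset.card_cons]
      push_cast
      linarith
  rw [mul_assoc]
  refine key _ Γ hΓ (fun i hi j hj => (hdom i j).trans ?_)
  refine mul_le_mul_of_nonneg_left ?_ hK
  rw [finsetDiam, dif_pos hΓ]
  exact Finset.le_sup' (fun p : L × L => d' p.1 p.2) (Finset.mk_mem_product hi hj)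
end

section
/- Let V be a finite set of variables, L a finite nonempty label set, θ : V → L → ℝ unary potentials, C a finite family of nonempty finite subsets of V (cliques), and w : C → ℝ nonnegative clique weights. Let δ be a diversity on L with diameter diversity δ^dia(Γ) = max_{i,j ∈ Γ} δ({i,j}). For a labeling x : V → L write Γ(x_c) = x(c) for the set of labels assigned to clique c. Then for every labeling x: Σ_{i} θ(i, x(i)) + Σ_{c ∈ C} w(c)·δ^dia(Γ(x_c)) ≤ Σ_{i} θ(i, x(i)) + Σ_{c ∈ C} w(c)·δ(Γ(x_c)) ≤ Σ_{i} θ(i, x(i)) + (|L| − 1) · Σ_{c ∈ C} w(c)·δ^dia(Γ(x_c)). -/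
theorem star_bound {L : Type*} [DecidableEq L] (D : Diversity L) (a : L) (M : ℝ)
    (S : Finset L) (h : ∀ b ∈ S, D.δ {b, a} ≤ M) :
    D.δ (insert a S) ≤ (S.card : ℝ) * M := by
  induction S using Finset.induction_on with
  | empty =>
    have : D.δ {a} = 0 := (D.eq_zero_iff _).2 (by simp)
    simp [this]
  | insert b S hb ih =>
    have h1 := ih (fun c hc => h c (Finset.mem_insert_of_mem hc))
    have h2 := h b (Finset.mem_insert_self b S)
    have h3 := D.triangle {b} {a} (insert a S) (Finset.singleton_nonempty a)
    have e1 : ({b} : Finset L) ∪ insert a S = insert a (insert b S) := by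
      ext; simp
    have e2 : ({b} : Finset L) ∪ {a} = {b, a} := by
      ext; simp
    have e3 : ({a} : Finset L) ∪ insert a S = insert a S := by
      ext; simp
    rw [e1, e2, e3] at h3
    rw [Finset.card_insert_of_notMem hb]
    push_cast
    linarith

theorem dia_le {L : Type*} [DecidableEq L] (D : Diversity L) (Γ : Finset L) :
    diaDiversity D Γ ≤ D.δ Γ := by
  unfold diaDiversity
  split_ifs with h
  · refine Finset.sup'_le _ _ (fun p hp => D.mono ?_)
    rw [Finset.mem_product] at hp
    intro y hy
    simp only [Finset.mem_insert, Finset.mem_singleton] at hy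
    rcases hy with rfl | rfl
    exacts [hp.1, hp.2]
  · exact D.nonneg _

theorem pair_le_dia {L : Type*} [DecidableEq L] (D : Diversity L) (Γ : Finset L)
    {a b : L} (ha : a ∈ Γ) (hb : b ∈ Γ) : D.δ {a, b} ≤ diaDiversity D Γ := by
  unfold diaDiversity
  rw [dif_pos ⟨a, ha⟩]
  exact Finset.le_sup' (fun p : L × L => D.δ {p.1, p.2})
    (Finset.mem_product.2 ⟨ha, hb⟩ : (a, b) ∈ Γ ×ˢ Γ)

theorem le_dia {L : Type*} [Fintype L] [DecidableEq L] (D : Diversity L) (Γ : Finset L)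
    (h : Γ.Nonempty) : D.δ Γ ≤ ((Fintype.card L : ℝ) - 1) * diaDiversity D Γ := by
  obtain ⟨a, ha⟩ := h
  have h1 := star_bound D a (diaDiversity D Γ) (Γ.erase a)
    (fun b hb => pair_le_dia D Γ (Finset.mem_of_mem_erase hb) ha)
  rw [Finset.insert_erase ha] at h1
  have h0 : 0 ≤ diaDiversity D Γ := (D.nonneg _).trans (pair_le_dia D Γ ha ha)
  refine h1.trans (mul_le_mul_of_nonneg_right ?_ h0)
  have h2 : (Γ.erase a).card + 1 ≤ Fintype.card L := by
    rw [Finset.card_erase_add_one ha]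
    exact Finset.card_le_univ Γ
  have h3 : ((Γ.erase a).card : ℝ) + 1 ≤ Fintype.card L := by exact_mod_cast h2
  linarith

/-- sandwiching the parsimonious labeling energy between diameter
diversity energies.  For any labeling `x`, the energy with diameter diversity
clique potentials lower-bounds the energy with diversity clique potentials,
which in turn is at most the unary energy plus `(|L| - 1)` times the diameter
diversity clique energy. -/
theorem parsimonious_energy_sandwich {V L : Type*} [Fintype V] [Fintype L]
    [Nonempty L] [DecidableEq L]
    (θ : V → L → ℝ) (C : Finset (Finset V)) (hC : ∀ c ∈ C, c.Nonempty)
    (w : Finset V → ℝ) (hw : ∀ c ∈ C, 0 ≤ w c)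
    (D : Diversity L) (x : V → L) :
    (∑ i, θ i (x i) + ∑ c ∈ C, w c * diaDiversity D (c.image x) ≤
      ∑ i, θ i (x i) + ∑ c ∈ C, w c * D.δ (c.image x)) ∧
    (∑ i, θ i (x i) + ∑ c ∈ C, w c * D.δ (c.image x) ≤
      ∑ i, θ i (x i) +
        ((Fintype.card L : ℝ) - 1) * ∑ c ∈ C, w c * diaDiversity D (c.image x)) := by
  constructor
  · gcongr with c hc
    · exact hw c hc
    · exact dia_le D _
  · rw [Finset.mul_sum]
    refine add_le_add le_rfl ?_
    refine Finset.sum_le_sum (fun c hc => ?_)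
    have := mul_le_mul_of_nonneg_left (le_dia D (c.image x) ((hC c hc).image x)) (hw c hc)
    linarith
end
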